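/- Let B : Y → U be a bounded linear operator such that for every y ∈ Y and every w ∈ U with A w = Q y one has B y = R w (i.e. B = R∘A^{-1}∘Q). Then B is the Moore–Penrose inverse of Q∘A, i.e. the four Moore–Penrose equations hold: (Q∘A)∘B∘(Q∘A) = Q∘A; B∘(Q∘A)∘B = B; B∘(Q∘A) = R; (Q∘A)∘B = Q. -/

import Mathlib

/-! Let `A'` be an adjoint of `A`. A vector is orthogonal to `A' K` exactly when its image under `A`
is orthogonal to `K`, so the orthogonal projection `R` onto `A' K` and the operator `Q ∘ A`, where
`Q` is the orthogonal projection onto `K`, have the same kernel. Thus `R u` depends only on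
`Q (A u)`, and the Moore–Penrose equations reduce to the idempotence of `Q` and `R`. -/

section

open scoped InnerProductSpace

variable {𝕜 U Y : Type*} [RCLike 𝕜]
  [NormedAddCommGroup U] [InnerProductSpace 𝕜 U] [NormedAddCommGroup Y] [InnerProductSpace 𝕜 Y]

theorem eq_starProjection_of_forall_mem_orthogonal {K : Submodule 𝕜 U} [K.HasOrthogonalProjection]
    {P : U →L[𝕜] U} (hP : ∀ u, P u ∈ K ∧ u - P u ∈ Kᗮ) : P = K.starProjection :=
  ContinuousLinearMap.ext fun u ↦
    (Submodule.eq_starProjection_of_mem_orthogonal (hP u).1 (hP u).2).symm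

theorem starProjection_eq_starProjection_iff {K : Submodule 𝕜 U} [K.HasOrthogonalProjection]
    {u v : U} : K.starProjection u = K.starProjection v ↔ u - v ∈ Kᗮ := by
  rw [← K.ker_starProjection]
  exact LinearMap.sub_mem_ker_iff.symm

variable {A : U →ₗ[𝕜] Y} {A' : Y →ₗ[𝕜] U}

theorem orthogonal_map_eq_comap_orthogonal (hA' : ∀ y u, ⟪A' y, u⟫_𝕜 = ⟪y, A u⟫_𝕜)
    (K : Submodule 𝕜 Y) : (K.map A')ᗮ = Kᗮ.comap A := by
  ext u
  simp [Submodule.mem_orthogonal, hA']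

variable {K : Submodule 𝕜 Y} [K.HasOrthogonalProjection] [(K.map A').HasOrthogonalProjection]

theorem starProjection_map_eq_iff (hA' : ∀ y u, ⟪A' y, u⟫_𝕜 = ⟪y, A u⟫_𝕜) {u v : U} :
    (K.map A').starProjection u = (K.map A').starProjection v ↔
      K.starProjection (A u) = K.starProjection (A v) := by
  rw [starProjection_eq_starProjection_iff, starProjection_eq_starProjection_iff,
    orthogonal_map_eq_comap_orthogonal hA', Submodule.mem_comap, map_sub]

theorem moore_penrose_inverse_of_dual_projected_operator_general
    (hA' : ∀ y u, ⟪A' y, u⟫_𝕜 = ⟪y, A u⟫_𝕜) (hK : K ≤ A.range) {B : Y → U}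
    (hB : ∀ y w, A w = K.starProjection y → B y = (K.map A').starProjection w) :
    (∀ u, K.starProjection (A (B (K.starProjection (A u)))) = K.starProjection (A u)) ∧
    (∀ y, B (K.starProjection (A (B y))) = B y) ∧
    (∀ u, B (K.starProjection (A u)) = (K.map A').starProjection u) ∧
    (∀ y, K.starProjection (A (B y)) = K.starProjection y) := by
  have idem_Q (y : Y) : K.starProjection (K.starProjection y) = K.starProjection y :=
    Submodule.starProjection_eq_self_iff.2 (K.starProjection_apply_mem y)
  have idem_R (u : U) : (K.map A').starProjection ((K.map A').starProjection u) =
      (K.map A').starProjection u :=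
    Submodule.starProjection_eq_self_iff.2 ((K.map A').starProjection_apply_mem u)
  have exists_preimage (y : Y) : ∃ w, A w = K.starProjection y := hK (K.starProjection_apply_mem y)
  have BQA_eq_R (u : U) : B (K.starProjection (A u)) = (K.map A').starProjection u := by
    obtain ⟨w, hw⟩ := exists_preimage (A u)
    rw [hB _ w (hw.trans (idem_Q _).symm), starProjection_map_eq_iff hA', hw, idem_Q]
  have QAB_eq_Q (y : Y) : K.starProjection (A (B y)) = K.starProjection y := by
    obtain ⟨w, hw⟩ := exists_preimage y
    rw [hB y w hw, (starProjection_map_eq_iff hA').1 (idem_R w), hw, idem_Q]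
  refine ⟨fun u ↦ by rw [QAB_eq_Q, idem_Q], fun y ↦ ?_, BQA_eq_R, QAB_eq_Q⟩
  obtain ⟨w, hw⟩ := exists_preimage y
  rw [BQA_eq_R, hB y w hw, idem_R]

end

/-- Let `U`, `Y` be real Hilbert spaces, `A : U → Y` an injective bounded linear operator
with adjoint `A*`, `Yₙ` a finite-dimensional subspace of `Y` contained in the range of
`A` with orthogonal projection `Q`, and `Z = A*(Yₙ)` with orthogonal projection `R`.
If `B : Y → U` is a bounded linear operator such that for every `y` and every `w` with
`A w = Q y` one has `B y = R w` (i.e. `B = R ∘ A⁻¹ ∘ Q`), then `B` is the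
Moore–Penrose inverse of `Q ∘ A`: the four Moore–Penrose equations hold. -/
theorem moore_penrose_inverse_of_dual_projected_operator
    {U Y : Type*} [NormedAddCommGroup U] [InnerProductSpace ℝ U] [CompleteSpace U]
    [NormedAddCommGroup Y] [InnerProductSpace ℝ Y] [CompleteSpace Y]
    (A : U →L[ℝ] Y) (hA : Function.Injective A)
    (Yn : Submodule ℝ Y) (hYn : FiniteDimensional ℝ Yn)
    (hYnA : (Yn : Set Y) ⊆ Set.range A)
    (Q : Y →L[ℝ] Y)
    (hQ : ∀ z : Y, Q z ∈ Yn ∧ z - Q z ∈ Ynᗮ)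
    (R : U →L[ℝ] U)
    (hR : ∀ x : U,
      R x ∈ Yn.map ((ContinuousLinearMap.adjoint A : Y →L[ℝ] U) : Y →ₗ[ℝ] U) ∧
      x - R x ∈ (Yn.map ((ContinuousLinearMap.adjoint A : Y →L[ℝ] U) : Y →ₗ[ℝ] U))ᗮ)
    (B : Y →L[ℝ] U)
    (hB : ∀ y : Y, ∀ w : U, A w = Q y → B y = R w) :
    (∀ u : U, Q (A (B (Q (A u)))) = Q (A u)) ∧
    (∀ y : Y, B (Q (A (B y))) = B y) ∧
    (∀ u : U, B (Q (A u)) = R u) ∧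
    (∀ y : Y, Q (A (B y)) = Q y) := by
  obtain rfl := eq_starProjection_of_forall_mem_orthogonal hQ
  obtain rfl := eq_starProjection_of_forall_mem_orthogonal hR
  exact moore_penrose_inverse_of_dual_projected_operator_general
    (fun y u ↦ A.adjoint_inner_left u y) hYnA hB
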